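/- arXiv:1411.7763 — 4 statements merged into one kernel-verified Lean document; each statement's English description precedes it below -/
import Mathlib

section
/- For every integer b ≥ 0, the polynomial P_b is symmetric under the exchange of its first and third variables: the image of P_b under the K-algebra automorphism of K[x,y,z] swapping x and z (and fixing y) equals P_b; that is, P_b(x,y,z) = P_b(z,y,x). -/
noncomputable section

open MvPolynomial

/-- The field `K = ℚ(q)` of rational functions in `q` over `ℚ`. -/
abbrev K : Type := RatFunc ℚ

/-- The variable `q ∈ K = ℚ(q)`. -/
def q : K := RatFunc.X

/-- The polynomial ring `K[x,y,z]`. -/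
abbrev P3 : Type := MvPolynomial (Fin 3) K

/-- The polynomials `P_b(x,y,z)`, defined by `P_0 = 1` and
`P_{b+1}(x,y,z) = (1−z)·P_b(x,y,q^{−2}z) − q^{−2b}·x·(1 − q^{−2b}·y·z)·P_b(x,y,z)`. -/
def P : ℕ → P3
  | 0 => 1
  | b + 1 =>
      (1 - X 2) * (aeval ![(X 0 : P3), X 1, C (q ^ (-2 : ℤ)) * X 2] (P b))
    - C (q ^ (-2 * (b : ℤ))) * X 0 * (1 - C (q ^ (-2 * (b : ℤ))) * X 1 * X 2) * P b

/-- The constant `q^{-2}`. -/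
def pc : P3 := C (q ^ (-2 : ℤ))

lemma C_pow_eq (b : ℕ) : (C (q ^ (-2 * (b : ℤ))) : P3) = pc ^ b := by
  rw [pc, ← C_pow, zpow_mul, zpow_natCast]

/-- Scaling `z` by `q^{-2}`. -/
def Tz : P3 →ₐ[K] P3 := aeval ![(X 0 : P3), X 1, pc * X 2]

/-- Scaling `x` by `q^{-2}`. -/
def Tx : P3 →ₐ[K] P3 := aeval ![pc * (X 0 : P3), X 1, X 2]

/-- Swapping `x` and `z`. -/
def Sw : P3 →ₐ[K] P3 := aeval ![(X 2 : P3), X 1, X 0]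

lemma Tz_pc : Tz pc = pc := by
  simp only [pc, ← algebraMap_eq]; exact AlgHom.commutes _ _
lemma Tx_pc : Tx pc = pc := by
  simp only [pc, ← algebraMap_eq]; exact AlgHom.commutes _ _
lemma Sw_pc : Sw pc = pc := by
  simp only [pc, ← algebraMap_eq]; exact AlgHom.commutes _ _

lemma Tz_X0 : Tz (X 0) = X 0 := by simp [Tz]
lemma Tz_X1 : Tz (X 1) = X 1 := by simp [Tz]
lemma Tz_X2 : Tz (X 2) = pc * X 2 := by simp [Tz]
lemma Tx_X0 : Tx (X 0) = pc * X 0 := by simp [Tx]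
lemma Tx_X1 : Tx (X 1) = X 1 := by simp [Tx]
lemma Tx_X2 : Tx (X 2) = X 2 := by simp [Tx]
lemma Sw_X0 : Sw (X 0) = X 2 := by simp [Sw]
lemma Sw_X1 : Sw (X 1) = X 1 := by simp [Sw]
lemma Sw_X2 : Sw (X 2) = X 0 := by simp [Sw]

lemma Tx_Tz (f : P3) : Tx (Tz f) = Tz (Tx f) := by
  have : Tx.comp Tz = Tz.comp Tx := by
    apply MvPolynomial.algHom_ext
    intro i
    fin_cases i <;>
      simp [Tz_X0, Tz_X1, Tz_X2, Tx_X0, Tx_X1, Tx_X2, Tz_pc, Tx_pc]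
  exact DFunLike.congr_fun this f

lemma Sw_Tz (f : P3) : Sw (Tz f) = Tx (Sw f) := by
  have : Sw.comp Tz = Tx.comp Sw := by
    apply MvPolynomial.algHom_ext
    intro i
    fin_cases i <;>
      simp [Tz_X0, Tz_X1, Tz_X2, Tx_X0, Tx_X1, Tx_X2, Sw_X0, Sw_X1, Sw_X2, Sw_pc]
  exact DFunLike.congr_fun this f

lemma P_succ_eq (b : ℕ) : P (b + 1) =
    (1 - X 2) * Tz (P b) - pc ^ b * X 0 * (1 - pc ^ b * X 1 * X 2) * P b := by
  rw [P, C_pow_eq]; rfl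

/-- The two recursions (in `z` and in `x`) agree on `P_b`. -/
lemma P_key (b : ℕ) :
    (1 - X 2) * Tz (P b) - (1 - X 0) * Tx (P b) - pc ^ b * (X 0 - X 2) * P b = 0 := by
  induction b with
  | zero => simp [P]
  | succ b h =>
    have hz := congrArg Tz h
    simp only [map_sub, map_mul, map_one, map_pow, map_zero, Tz_X0, Tz_X2, Tz_pc] at hz
    rw [P_succ_eq]
    simp only [map_sub, map_mul, map_one, map_pow, Tz_X0, Tz_X1, Tz_X2, Tx_X0, Tx_X1, Tx_X2,
      Tz_pc, Tx_pc, Tx_Tz]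
    linear_combination (1 - X 2) * hz + (pc ^ (2 * b + 1) * (1 - pc) * X 0 * X 1 * X 2
      - pc ^ (b + 1) * X 0 * (1 - pc ^ (b + 1) * X 1 * X 2)) * h

/-- `P_b(x,y,z) = P_b(z,y,x)`. -/
theorem P_symm (b : ℕ) : aeval ![(X 2 : P3), X 1, X 0] (P b) = P b := by
  change Sw (P b) = P b
  induction b with
  | zero => simp [P]
  | succ b ih =>
    rw [P_succ_eq]
    simp only [map_sub, map_mul, map_one, map_pow, Sw_X0, Sw_X1, Sw_X2, Sw_pc, Sw_Tz, ih]
    linear_combination - P_key b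
end
end

section
/- For every integer b ≥ 1, the polynomial P_b satisfies the q-difference equation P_b(q²x,y,z) − P_b(x,y,z) − q^{2−2b}·x·(1−q^{2b})·(1 − q^{2−2b}·y·z)·P_{b−1}(x,y,z) = 0. -/
noncomputable section

open MvPolynomial

def sg : P3 →ₐ[K] P3 := aeval ![(X 0 : P3), X 1, C (q ^ (-2 : ℤ)) * X 2]

def ta : P3 →ₐ[K] P3 := aeval ![C (q ^ (2 : ℕ)) * (X 0 : P3), X 1, X 2]

def sC : P3 := C (q ^ (-2 : ℤ))

def uC : P3 := C (q ^ (2 : ℕ))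

lemma q_ne : q ≠ 0 := RatFunc.X_ne_zero

lemma su : sC * uC = 1 := by
  have hq := q_ne
  rw [sC, uC, ← C_mul, ← C_1]
  congr 1
  rw [← zpow_natCast, ← zpow_add₀ hq]
  simp

lemma sC_pow (b : ℕ) : C (q ^ (-2 * (b : ℤ))) = sC ^ b := by
  rw [sC, ← C_pow, zpow_mul, zpow_natCast]

lemma sg_X0 : sg (X 0) = X 0 := by simp [sg]
lemma sg_X1 : sg (X 1) = X 1 := by simp [sg]
lemma sg_X2 : sg (X 2) = sC * X 2 := by simp [sg, sC]
lemma sg_C (a : K) : sg (C a) = C a := sg.commutes a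
lemma ta_X0 : ta (X 0) = uC * X 0 := by simp [ta, uC]
lemma ta_X1 : ta (X 1) = X 1 := by simp [ta]
lemma ta_X2 : ta (X 2) = X 2 := by simp [ta]
lemma ta_C (a : K) : ta (C a) = C a := ta.commutes a

lemma ta_sg (p : P3) : ta (sg p) = sg (ta p) := by
  have h : ta.comp sg = sg.comp ta := by
    apply MvPolynomial.algHom_ext
    intro i
    fin_cases i
    · simp [sg_X0, ta_X0, uC, sg_C]
    · simp [sg_X1, ta_X1]
    · simp [sg_X2, ta_X2, sC, ta_C]
  exact DFunLike.congr_fun h p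

lemma P_succ (b : ℕ) : P (b + 1) =
    (1 - X 2) * sg (P b) - sC ^ b * X 0 * (1 - sC ^ b * X 1 * X 2) * P b := by
  rw [P, sC_pow, sg]

lemma ta_P (b : ℕ) : ta (P (b + 1)) = P (b + 1) +
    (1 - uC ^ (b + 1)) * (sC ^ b * X 0 * (1 - sC ^ b * X 1 * X 2)) * P b := by
  have tas : ta sC = sC := ta_C _
  have sgs : sg sC = sC := sg_C _
  have sgu : sg uC = uC := sg_C _
  have hsu := su
  induction b with
  | zero =>
    rw [P_succ]
    simp [P, ta_X0, ta_X1, ta_X2]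
    ring
  | succ b ih =>
    have h1 := P_succ b
    have h2 := P_succ (b + 1)
    rw [h2]
    simp only [map_sub, map_mul, map_one, map_pow, tas, ta_X0, ta_X1, ta_X2, ta_sg]
    rw [ih]
    simp only [map_sub, map_add, map_mul, map_one, map_pow, sgs, sgu, sg_X0, sg_X1, sg_X2]
    have e : sC ^ b = uC * sC ^ (b + 1) := by
      rw [pow_succ]; linear_combination (-sC ^ b) * hsu
    have e2 : sC ^ b * (1 - sC ^ b * X 1 * (sC * X 2))
        = uC * sC ^ (b + 1) * (1 - sC ^ (b + 1) * X 1 * X 2) := by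
      rw [← e]; ring
    linear_combination ((1 - X 2) * (1 - uC ^ (b + 1)) * X 0 * sg (P b)) * e2 -
      (uC * sC ^ (b + 1) * X 0 * (1 - sC ^ (b + 1) * X 1 * X 2) * (1 - uC ^ (b + 1))) * h1

/-- for `b ≥ 1`,
`P_b(q²x,y,z) − P_b(x,y,z) − q^{2−2b}·x·(1−q^{2b})·(1 − q^{2−2b}·y·z)·P_{b−1}(x,y,z) = 0`. -/
theorem P_E42 (b : ℕ) (hb : 1 ≤ b) :
    aeval ![C (q ^ (2 : ℕ)) * (X 0 : P3), X 1, X 2] (P b) - P b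
      - C (q ^ (2 - 2 * (b : ℤ)) * (1 - q ^ (2 * b))) * X 0
          * (1 - C (q ^ (2 - 2 * (b : ℤ))) * X 1 * X 2) * P (b - 1) = 0 := by
  obtain ⟨b, rfl⟩ : ∃ c, b = c + 1 := ⟨b - 1, by omega⟩
  have h := ta_P b
  have e : (2 - 2 * ((b + 1 : ℕ) : ℤ)) = -2 * (b : ℤ) := by push_cast; ring
  have e2 : (C (1 - q ^ (2 * (b + 1))) : P3) = 1 - uC ^ (b + 1) := by
    rw [uC, ← C_pow, ← pow_mul, C_sub, C_1]
  rw [e, C_mul, sC_pow, e2, Nat.add_sub_cancel]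
  rw [ta] at h
  rw [h]
  ring
end
end

section
/- For every integer b ≥ 0, the polynomial P_b is given by the terminating q-hypergeometric formula P_b(x,y,z) = ∑_{n=0}^{b} [(q^{−2b};q²)_n · (q^{2−2b}·y·z;q²)_n · (q^{2+2n−2b}·z;q²)_{b−n} / (q²;q²)_n] · (q²·x)^n, where for an element a of K[x,y,z] and p ∈ K, (a;p)_n = ∏_{j=0}^{n−1}(1 − a·p^j); in particular (q^{2−2b}·y·z;q²)_n = ∏_{j=0}^{n−1}(1 − q^{2−2b+2j}·y·z) and (q^{2+2n−2b}·z;q²)_{b−n} = ∏_{j=0}^{b−n−1}(1 − q^{2+2n−2b+2j}·z). -/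
noncomputable section

open MvPolynomial

open Finset in
/-- The q-Pochhammer symbol `(a;p)_n = ∏_{j<n} (1 − a·p^j)` in `K`. -/
def poch (a p : K) (n : ℕ) : K := ∏ j ∈ range n, (1 - a * p ^ j)

lemma q_pow_ne (n : ℕ) : (1 : K) - q ^ 2 * (q ^ 2) ^ n ≠ 0 := by
  intro h
  have h1 : (RatFunc.X : RatFunc ℚ) ^ (2 * n + 2) = 1 := by
    have : q ^ (2 * n + 2) = 1 := by
      linear_combination (-1 : K) * h
    exact this
  have h2 : algebraMap (Polynomial ℚ) (RatFunc ℚ) (Polynomial.X ^ (2 * n + 2))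
      = algebraMap (Polynomial ℚ) (RatFunc ℚ) 1 := by
    rw [map_pow, RatFunc.algebraMap_X, h1, map_one]
  have h3 := RatFunc.algebraMap_injective ℚ h2
  have h4 := congrArg (Polynomial.eval 0) h3
  simp at h4

/-- scalar coefficient -/
def acoef (b n : ℕ) : K := poch (q ^ (-2 * (b : ℤ))) (q ^ 2) n / poch (q ^ 2) (q ^ 2) n

open Finset in
/-- the factor in `yz` -/
def Yf (b n : ℕ) : P3 := ∏ j ∈ range n,
  (1 - C (q ^ (2 - 2 * (b : ℤ) + 2 * (j : ℤ))) * (X 1 : P3) * X 2)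

open Finset in
/-- the factor in `z` -/
def Zf (b n : ℕ) : P3 := ∏ j ∈ range (b - n),
  (1 - C (q ^ (2 + 2 * (n : ℤ) - 2 * (b : ℤ) + 2 * (j : ℤ))) * (X 2 : P3))

lemma poch_ne (n : ℕ) : poch (q ^ 2) (q ^ 2) n ≠ 0 :=
  Finset.prod_ne_zero_iff.mpr fun j _ => q_pow_ne j

lemma acoef_zero (b : ℕ) : acoef b 0 = 1 := by simp [acoef, poch]

lemma acoef_top (b : ℕ) : acoef b (b + 1) = 0 := by
  have : poch (q ^ (-2 * (b : ℤ))) (q ^ 2) (b + 1) = 0 := by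
    unfold poch
    rw [Finset.prod_range_succ]
    have h : q ^ (-2 * (b : ℤ)) * (q ^ 2) ^ b = 1 := by
      rw [← pow_mul, ← zpow_natCast, ← zpow_add₀ q_ne]
      have : (-2 * (b : ℤ) + ((2 * b : ℕ) : ℤ)) = 0 := by push_cast; ring
      rw [this, zpow_zero]
    rw [h]; simp
  rw [acoef, this, zero_div]

lemma acoef_rec (b n : ℕ) :
    acoef (b + 1) (n + 1) * q ^ 2 = acoef b (n + 1) * q ^ 2 - q ^ (-2 * (b : ℤ)) * acoef b n := by
  have hb : q ^ (-2 * ((b + 1 : ℕ) : ℤ)) * q ^ 2 = q ^ (-2 * (b : ℤ)) := by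
    rw [← zpow_natCast, ← zpow_add₀ q_ne]
    congr 1; push_cast; ring
  have e1 : poch (q ^ (-2 * ((b + 1 : ℕ) : ℤ))) (q ^ 2) (n + 1)
      = poch (q ^ (-2 * (b : ℤ))) (q ^ 2) n * (1 - q ^ (-2 * ((b + 1 : ℕ) : ℤ))) := by
    unfold poch
    rw [Finset.prod_range_succ', pow_zero, mul_one]
    congr 1
    apply Finset.prod_congr rfl
    intro j _
    rw [← hb]; ring
  have e2 : ∀ a : K, poch a (q ^ 2) (n + 1) = poch a (q ^ 2) n * (1 - a * (q ^ 2) ^ n) := by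
    intro a; unfold poch; rw [Finset.prod_range_succ]
  unfold acoef
  rw [e1, e2, e2]
  have h1 := poch_ne n
  have h2 := q_pow_ne n
  rw [← hb]
  generalize q ^ (-2 * ((b + 1 : ℕ) : ℤ)) = u at *
  generalize q ^ (-2 * (b : ℤ)) = v at *
  subst hb
  generalize poch (q ^ 2) (q ^ 2) n = d at *
  generalize poch (u * q ^ 2) (q ^ 2) n = e at *
  generalize (q ^ 2) ^ n = w at *
  generalize q ^ 2 = p at *
  field_simp
  ring

lemma shift_Y (b n : ℕ) :
    aeval ![(X 0 : P3), X 1, C (q ^ (-2 : ℤ)) * X 2] (Yf b n) = Yf (b + 1) n := by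
  unfold Yf
  rw [map_prod]
  apply Finset.prod_congr rfl
  intro j _
  have : q ^ (2 - 2 * ((b + 1 : ℕ) : ℤ) + 2 * (j : ℤ))
      = q ^ (2 - 2 * (b : ℤ) + 2 * (j : ℤ)) * q ^ (-2 : ℤ) := by
    rw [← zpow_add₀ q_ne]; congr 1; push_cast; ring
  rw [this, C_mul]
  simp only [map_sub, map_mul, map_one, aeval_X, algHom_C, algebraMap_eq]
  simp
  ring

lemma shift_Z (b n : ℕ) (h : n ≤ b) :
    (1 - X 2) * aeval ![(X 0 : P3), X 1, C (q ^ (-2 : ℤ)) * X 2] (Zf b n) = Zf (b + 1) n := by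
  unfold Zf
  rw [map_prod, Nat.succ_sub h, Finset.prod_range_succ, mul_comm]
  congr 1
  · apply Finset.prod_congr rfl
    intro j _
    have : q ^ (2 + 2 * (n : ℤ) - 2 * ((b + 1 : ℕ) : ℤ) + 2 * (j : ℤ))
        = q ^ (2 + 2 * (n : ℤ) - 2 * (b : ℤ) + 2 * (j : ℤ)) * q ^ (-2 : ℤ) := by
      rw [← zpow_add₀ q_ne]; congr 1; push_cast; ring
    rw [this, C_mul]
    simp only [map_sub, map_mul, map_one, aeval_X, algHom_C, algebraMap_eq]
    simp
    ring
  · have : (2 + 2 * (n : ℤ) - 2 * ((b + 1 : ℕ) : ℤ) + 2 * ((b - n : ℕ) : ℤ)) = 0 := by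
      push_cast [Nat.cast_sub h]; ring
    rw [this]; simp

lemma Y_succ (b n : ℕ) :
    (1 - C (q ^ (-2 * (b : ℤ))) * X 1 * X 2) * Yf b n = Yf (b + 1) (n + 1) := by
  unfold Yf
  rw [Finset.prod_range_succ', mul_comm]
  congr 1
  · apply Finset.prod_congr rfl
    intro j _
    congr 5; push_cast; ring
  · congr 5; push_cast; ring

lemma Z_succ (b n : ℕ) : Zf b n = Zf (b + 1) (n + 1) := by
  unfold Zf
  rw [Nat.add_sub_add_right]
  apply Finset.prod_congr rfl
  intro j _
  congr 4; push_cast; ring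

open Finset in
lemma P_formula (b : ℕ) :
    P b = ∑ n ∈ range (b + 1),
      C (acoef b n) * Yf b n * Zf b n * (C (q ^ (2 : ℕ)) * (X 0 : P3)) ^ n := by
  induction b with
  | zero => simp [P, acoef_zero, Yf, Zf]
  | succ b ih =>
    have hA : (1 - X 2) * (aeval ![(X 0 : P3), X 1, C (q ^ (-2 : ℤ)) * X 2] (P b))
        = ∑ n ∈ range (b + 1 + 1),
          C (acoef b n) * Yf (b + 1) n * Zf (b + 1) n * (C (q ^ (2 : ℕ)) * (X 0 : P3)) ^ n := by
      rw [sum_range_succ, acoef_top, C_0, zero_mul, zero_mul, zero_mul, add_zero, ih, map_sum,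
        mul_sum]
      apply sum_congr rfl
      intro n hn
      have hn' : n ≤ b := Nat.lt_succ_iff.mp (mem_range.mp hn)
      rw [← shift_Z b n hn', ← shift_Y]
      rw [map_mul, map_mul, map_mul, map_pow, map_mul, aeval_X, algHom_C, algHom_C]
      simp only [algebraMap_eq, Matrix.cons_val_zero]
      ring
    have hB : C (q ^ (-2 * (b : ℤ))) * X 0 * (1 - C (q ^ (-2 * (b : ℤ))) * X 1 * X 2) * P b
        = ∑ n ∈ range (b + 1), C (q ^ (-2 * (b : ℤ)) * acoef b n) * Yf (b + 1) (n + 1)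
          * Zf (b + 1) (n + 1) * (X 0 * (C (q ^ (2 : ℕ)) * (X 0 : P3)) ^ n) := by
      rw [ih, mul_sum]
      apply sum_congr rfl
      intro n _
      rw [← Y_succ, ← Z_succ, C_mul]
      ring
    rw [P, hA, hB, sum_range_succ', sum_range_succ' _ (b + 1), add_sub_right_comm,
      ← sum_sub_distrib]
    congr 1
    · apply sum_congr rfl
      intro n _
      have h := congrArg (C : K → P3) (acoef_rec b n)
      rw [C_mul, C_sub, C_mul] at h
      rw [pow_succ]
      linear_combination (-(Yf (b + 1) (n + 1) * Zf (b + 1) (n + 1) * X 0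
        * (C (q ^ (2 : ℕ)) * (X 0 : P3)) ^ n)) * h

open Finset in
/-- the terminating q-hypergeometric formula
`P_b(x,y,z) = ∑_{n=0}^{b} (q^{−2b};q²)_n (q^{2−2b}yz;q²)_n (q^{2+2n−2b}z;q²)_{b−n}
/ (q²;q²)_n · (q²x)^n`. -/
theorem P_qhg (b : ℕ) :
    P b =
      ∑ n ∈ range (b + 1),
        C (poch (q ^ (-2 * (b : ℤ))) (q ^ 2) n / poch (q ^ 2) (q ^ 2) n)
          * (∏ j ∈ range n,
              (1 - C (q ^ (2 - 2 * (b : ℤ) + 2 * (j : ℤ))) * (X 1 : P3) * X 2))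
          * (∏ j ∈ range (b - n),
              (1 - C (q ^ (2 + 2 * (n : ℤ) - 2 * (b : ℤ) + 2 * (j : ℤ))) * (X 2 : P3)))
          * (C (q ^ (2 : ℕ)) * (X 0 : P3)) ^ n := by
  exact P_formula b
end
end

section
/- Let a,b,c,i,j,k ∈ ℤ_{≥0} satisfy a + b = i + j and b + c = j + k. Then the following identity holds in K = ℚ(q): q^{(a−j)(c−j)} · P_b(q^{2i},q^{2j},q^{2k}) / (q²;q²)_b = ∑_{μ=0}^{min(b,i)} (−1)^{b−μ} · q^{ik + b + (b−μ)(c−a) + μ(μ−i−k−1)} · [(q²;q²)_{a+b−μ} / ((q²;q²)_{b−μ}·(q²;q²)_a)] · [(q²;q²)_i / ((q²;q²)_μ·(q²;q²)_{i−μ})], where P_b(q^{2i},q^{2j},q^{2k}) ∈ K denotes the evaluation of P_b at x = q^{2i}, y = q^{2j}, z = q^{2k}, and (a;p)_n = ∏_{j=0}^{n−1}(1 − a·p^j), with exponents of q interpreted as integers (possibly negative). -/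
noncomputable section

open MvPolynomial

/-- `(q²;q²)_n`. -/
def q2p (n : ℕ) : K := poch (q ^ 2) (q ^ 2) n

lemma q_pow_ne_s19 (m : ℕ) : 1 - q ^ (m + 1) ≠ 0 := by
  intro h
  have h1 : (q : K) ^ (m + 1) = 1 := (sub_eq_zero.mp h).symm
  have h2 : (algebraMap (Polynomial ℚ) K) (Polynomial.X ^ (m + 1)) =
      (algebraMap (Polynomial ℚ) K) 1 := by
    rw [map_pow, RatFunc.algebraMap_X, map_one]; exact h1
  have h3 := RatFunc.algebraMap_injective ℚ h2
  have h4 := congrArg Polynomial.natDegree h3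
  simp at h4

lemma q2p_zero : q2p 0 = 1 := by simp [q2p, poch]

lemma q2p_succ (n : ℕ) : q2p (n + 1) = q2p n * (1 - q ^ (2 * n + 2)) := by
  simp only [q2p, poch, Finset.prod_range_succ]
  congr 2
  ring

lemma q2p_ne (n : ℕ) : q2p n ≠ 0 := by
  induction n with
  | zero => simp [q2p_zero]
  | succ n ih => rw [q2p_succ]; exact mul_ne_zero ih (q_pow_ne_s19 (2 * n + 1))

/-- Gaussian binomials in `q²`. -/
def G : ℕ → ℕ → K
  | _, 0 => 1
  | 0, _ + 1 => 0
  | b + 1, n + 1 => q ^ (2 * n + 2) * G b (n + 1) + G b n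

lemma G_zero (b : ℕ) : G b 0 = 1 := by cases b <;> rfl

lemma G_succ (b n : ℕ) : G (b + 1) (n + 1) = q ^ (2 * n + 2) * G b (n + 1) + G b n := rfl

lemma G_lt (b : ℕ) : ∀ n, b < n → G b n = 0 := by
  induction b with
  | zero => intro n hn; cases n with
    | zero => omega
    | succ n => rfl
  | succ b ih => intro n hn; cases n with
    | zero => omega
    | succ n => rw [G_succ, ih _ (by omega), ih _ (by omega)]; simp

lemma G_closed (b : ℕ) : ∀ n m, n + m = b → G b n * (q2p n * q2p m) = q2p b := by
  induction b with
  | zero =>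
    intro n m h
    obtain rfl : n = 0 := by omega
    obtain rfl : m = 0 := by omega
    simp [G_zero, q2p_zero]
  | succ b ih =>
    intro n m h
    cases n with
    | zero => obtain rfl : m = b + 1 := by omega
              simp [G_zero, q2p_zero]
    | succ n =>
      have e1 := ih n m (by omega)
      cases m with
      | zero =>
        obtain rfl : n = b := by omega
        rw [q2p_zero, mul_one] at e1
        rw [G_succ, G_lt _ _ (Nat.lt_succ_self _), q2p_succ, q2p_zero]
        linear_combination (1 - q ^ (2 * n + 2)) * e1
      | succ m =>
        have e2 := ih (n + 1) m (by omega)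
        obtain rfl : b = n + 1 + m := by omega
        rw [G_succ, q2p_succ (n + 1 + m)]
        rw [q2p_succ n] at *
        rw [q2p_succ m] at *
        linear_combination (q ^ (2 * n + 2) * (1 - q ^ (2 * m + 2))) * e2 +
          (1 - q ^ (2 * n + 2)) * e1

lemma G_ratio (n m : ℕ) :
    (1 - q ^ (2 * n + 2)) * G (n + m) (n + 1) = (1 - q ^ (2 * m)) * G (n + m) n := by
  cases m with
  | zero => rw [G_lt _ _ (by omega)]; simp
  | succ m =>
    have e1 := G_closed (n + (m + 1)) n (m + 1) rfl
    have e2 := G_closed (n + (m + 1)) (n + 1) m (by omega)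
    rw [q2p_succ] at e1 e2
    have := mul_ne_zero (q2p_ne n) (q2p_ne m)
    apply mul_right_cancel₀ this
    have h : 2 * (m + 1) = 2 * m + 2 := by ring
    rw [h]
    linear_combination e2 - e1

/-- coefficient of `z^n` in `P_b`, with `w = x y`. -/
def A (x w : K) (b n : ℕ) : K :=
  q ^ (-((b : ℤ) * ((b : ℤ) - 1))) * G b n * (-1) ^ n
    * (∏ s ∈ Finset.range (b - n), (q ^ (2 * s) - x))
    * ∏ s ∈ Finset.range n, (1 - w * q ^ (2 * ((s : ℤ) + 1 - b)))

lemma A_lt (x w : K) (b n : ℕ) (h : b < n) : A x w b n = 0 := by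
  simp [A, G_lt b n h]

lemma tri (b : ℕ) : q ^ (-(((b + 1 : ℕ) : ℤ) * (((b + 1 : ℕ) : ℤ) - 1)))
    = q ^ (-((b : ℤ) * ((b : ℤ) - 1))) * q ^ (-2 * (b : ℤ)) := by
  rw [← zpow_add₀ q_ne]; congr 1; push_cast; ring

lemma A_succ_zero (x w : K) (b : ℕ) :
    A x w (b + 1) 0 = A x w b 0 * (1 - q ^ (-2 * (b : ℤ)) * x) := by
  have hq : q ^ (-2 * (b : ℤ)) * q ^ (2 * b) = 1 := by
    rw [← zpow_natCast, ← zpow_add₀ q_ne]; simp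
  simp only [A, tri, G_zero, Nat.sub_zero, Finset.prod_range_succ, Finset.prod_range_zero]
  linear_combination (q ^ (-((b : ℤ) * ((b : ℤ) - 1))) *
    ∏ s ∈ Finset.range b, (q ^ (2 * s) - x)) * hq

lemma A_succ_succ (x w : K) (b n : ℕ) (h : n ≤ b) :
    A x w (b + 1) (n + 1) =
      A x w b (n + 1) * (q ^ (-2 * ((n : ℤ) + 1)) - q ^ (-2 * (b : ℤ)) * x)
      - A x w b n * (q ^ (-2 * (n : ℤ)) - q ^ (-2 * (b : ℤ)) * q ^ (-2 * (b : ℤ)) * w) := by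
  obtain ⟨m, rfl⟩ := Nat.exists_eq_add_of_le h
  have hr := G_ratio n m
  have hD : ∏ s ∈ Finset.range (n + 1), (1 - w * q ^ (2 * ((s : ℤ) + 1 - ((n + m + 1 : ℕ) : ℤ))))
      = (∏ s ∈ Finset.range n, (1 - w * q ^ (2 * ((s : ℤ) + 1 - ((n + m : ℕ) : ℤ)))))
        * (1 - w * q ^ (-2 * ((n + m : ℕ) : ℤ))) := by
    rw [Finset.prod_range_succ']
    congr 1
    · apply Finset.prod_congr rfl
      intro s _
      congr 3; push_cast; ring
    · congr 3; push_cast; ring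
  have hF : A x w (n + m) (n + 1) * (q ^ (-2 * ((n : ℤ) + 1)) - q ^ (-2 * ((n + m : ℕ) : ℤ)) * x)
     = q ^ (-(((n + m : ℕ) : ℤ) * (((n + m : ℕ) : ℤ) - 1))) * q ^ (-2 * ((n + m : ℕ) : ℤ))
      * G (n + m) (n + 1) * (-1) ^ (n + 1)
      * (∏ s ∈ Finset.range m, (q ^ (2 * s) - x))
      * ∏ s ∈ Finset.range (n + 1), (1 - w * q ^ (2 * ((s : ℤ) + 1 - ((n + m : ℕ) : ℤ)))) := by
    cases m with
    | zero => rw [A_lt _ _ _ _ (by omega), G_lt _ _ (by omega)]; simp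
    | succ m =>
      have hq : q ^ (-2 * ((n : ℤ) + 1)) = q ^ (-2 * ((n + (m + 1) : ℕ) : ℤ)) * q ^ (2 * m) := by
        rw [← zpow_natCast, ← zpow_add₀ q_ne]; congr 1; push_cast; ring
      have hs : n + (m + 1) - (n + 1) = m := by omega
      rw [A, hq, hs, Finset.prod_range_succ _ m]
      ring
  rw [hF]
  have hs : n + m + 1 - (n + 1) = m := by omega
  have hs' : n + m - n = m := by omega
  rw [A, A, hD, tri, hs, hs', G_succ, Finset.prod_range_succ _ n]
  set D := ∏ s ∈ Finset.range n, (1 - w * q ^ (2 * ((s : ℤ) + 1 - ((n + m : ℕ) : ℤ))))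
  set E := ∏ s ∈ Finset.range m, (q ^ (2 * s) - x)
  have k1 : q ^ (-2 * (n : ℤ)) = q ^ (-2 * ((n + m : ℕ) : ℤ)) * q ^ (2 * m) := by
    rw [← zpow_natCast, ← zpow_add₀ q_ne]; congr 1; push_cast; ring
  have k2 : q ^ (2 * ((n : ℤ) + 1 - ((n + m : ℕ) : ℤ))) =
      q ^ (-2 * ((n + m : ℕ) : ℤ)) * q ^ (2 * n + 2) := by
    rw [← zpow_natCast, ← zpow_add₀ q_ne]; congr 1; push_cast; ring
  rw [k1, k2]
  set T := q ^ (-(((n + m : ℕ) : ℤ) * (((n + m : ℕ) : ℤ) - 1)))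
  set R := q ^ (-2 * ((n + m : ℕ) : ℤ))
  rw [pow_succ (-1 : K) n]
  linear_combination (T * R * (-1) ^ n * E * D) * hr

lemma eval_P (b : ℕ) : ∀ x y z : K, aeval (![x, y, z] : Fin 3 → K) (P b) =
    ∑ n ∈ Finset.range (b + 1), A x (x * y) b n * z ^ n := by
  induction b with
  | zero => intro x y z; simp [P, A, G_zero]
  | succ b ih =>
    intro x y z
    have hc : aeval (![x, y, z] : Fin 3 → K)
        (aeval ![(X 0 : P3), X 1, C (q ^ (-2 : ℤ)) * X 2] (P b)) =
        aeval (![x, y, q ^ (-2 : ℤ) * z] : Fin 3 → K) (P b) := by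
      rw [← AlgHom.comp_apply]
      congr 1
      apply MvPolynomial.algHom_ext
      intro t
      fin_cases t <;> simp [MvPolynomial.algebraMap_eq]
    have hz : ∀ n : ℕ, (q ^ (-2 : ℤ) * z) ^ n = q ^ (-2 * (n : ℤ)) * z ^ n := by
      intro n; rw [mul_pow, ← zpow_natCast, ← zpow_mul]
    rw [P]
    simp only [map_sub, map_mul, map_one, hc, aeval_X, aeval_C, ih, hz]
    simp only [Algebra.algebraMap_self, RingHom.id_apply, Matrix.cons_val_zero, Matrix.cons_val_one,
      Matrix.cons_val]
    set w := x * y with hw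
    set R := q ^ (-2 * (b : ℤ)) with hR
    have e1 : ∑ n ∈ Finset.range (b + 1 + 1), A x w (b + 1) n * z ^ n =
      (∑ n ∈ Finset.range (b + 1 + 1), A x w b n * (q ^ (-2 * (n : ℤ)) - R * x) * z ^ n)
      - z * ∑ n ∈ Finset.range (b + 1), A x w b n * (q ^ (-2 * (n : ℤ)) - R * R * w) * z ^ n := by
      rw [Finset.sum_range_succ' _ (b + 1), Finset.sum_range_succ' _ (b + 1), A_succ_zero,
        Finset.mul_sum, add_sub_right_comm, ← Finset.sum_sub_distrib]
      congr 1
      · apply Finset.sum_congr rfl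
        intro n hn
        rw [A_succ_succ x w b n (by simpa [Nat.lt_succ_iff] using hn)]
        push_cast
        ring
    rw [e1, Finset.sum_range_succ _ (b + 1), A_lt x w b (b + 1) (Nat.lt_succ_self _)]
    simp only [zero_mul, add_zero]
    simp only [sub_mul, mul_sub, Finset.sum_sub_distrib, Finset.mul_sum, one_mul]
    have e2 : ∀ f : ℕ → K, ∀ g : ℕ → K, (∀ n, f n = g n) →
      ∑ n ∈ Finset.range (b + 1), f n = ∑ n ∈ Finset.range (b + 1), g n :=
      fun f g h => Finset.sum_congr rfl (fun n _ => h n)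
    rw [e2 (fun n => A x w b n * (q ^ (-2 * (n : ℤ)) * z ^ n)) (fun n => A x w b n * q ^ (-2 * (n : ℤ)) * z ^ n) (fun n => by ring),
      e2 (fun n => z * (A x w b n * (q ^ (-2 * (n : ℤ)) * z ^ n))) (fun n => z * (A x w b n * q ^ (-2 * (n : ℤ)) * z ^ n)) (fun n => by ring),
      e2 (fun n => R * x * 1 * (A x w b n * z ^ n)) (fun n => A x w b n * (R * x) * z ^ n) (fun n => by ring),
      e2 (fun n => R * x * (R * y * z) * (A x w b n * z ^ n)) (fun n => z * (A x w b n * (R * R * w) * z ^ n)) (fun n => by rw [hw]; ring)]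
    ring

lemma prodE (i : ℕ) : ∀ μ, μ ≤ i → ∏ s ∈ Finset.range μ, (q ^ (2 * s) - q ^ (2 * i)) =
    q ^ ((μ : ℤ) * ((μ : ℤ) - 1)) * (q2p i / q2p (i - μ)) := by
  intro μ
  induction μ with
  | zero => intro _; simp [q2p_ne]
  | succ μ ih =>
    intro h
    rw [Finset.prod_range_succ, ih (by omega)]
    obtain ⟨d, rfl⟩ := Nat.exists_eq_add_of_le h
    have e1 : μ + 1 + d - μ = d + 1 := by omega
    have e2 : μ + 1 + d - (μ + 1) = d := by omega
    have e3 : q ^ (((μ + 1 : ℕ) : ℤ) * (((μ + 1 : ℕ) : ℤ) - 1)) =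
        q ^ ((μ : ℤ) * ((μ : ℤ) - 1)) * q ^ (2 * μ) := by
      rw [← zpow_natCast, ← zpow_add₀ q_ne]; congr 1; push_cast; ring
    have := q_pow_ne_s19 (2 * d + 1)
    have := q2p_ne d
    rw [e1, e2, e3, q2p_succ]
    field_simp
    ring

lemma prodD (a b : ℕ) (w : K) (hw : w = q ^ (2 * (a + b))) : ∀ n,
    ∏ s ∈ Finset.range n, (1 - w * q ^ (2 * ((s : ℤ) + 1 - b))) = q2p (a + n) / q2p a := by
  intro n
  induction n with
  | zero => simp [q2p_ne]
  | succ n ih =>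
    rw [Finset.prod_range_succ, ih, ← add_assoc, q2p_succ, hw, ← zpow_natCast, ← zpow_add₀ q_ne,
      ← zpow_natCast q (2 * (a + n) + 2)]
    have : ((2 * (a + b) : ℕ) : ℤ) + 2 * ((n : ℤ) + 1 - b) = ((2 * (a + n) + 2 : ℕ) : ℤ) := by
      push_cast; ring
    rw [this]
    ring

open Finset in
/-- for `a + b = i + j` and `b + c = j + k`,
`q^{(a−j)(c−j)} P_b(q^{2i},q^{2j},q^{2k}) / (q²;q²)_b` equals the stated sum over
`μ = 0, …, min(b,i)`. -/
theorem P_matrix_element (a b c i j k : ℕ) (h1 : a + b = i + j) (h2 : b + c = j + k) :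
    q ^ (((a : ℤ) - (j : ℤ)) * ((c : ℤ) - (j : ℤ)))
        * aeval (![q ^ (2 * i), q ^ (2 * j), q ^ (2 * k)] : Fin 3 → K) (P b) / q2p b =
      ∑ μ ∈ range (min b i + 1),
        (-1 : K) ^ (b - μ)
          * q ^ ((i : ℤ) * (k : ℤ) + (b : ℤ)
                  + ((b : ℤ) - (μ : ℤ)) * ((c : ℤ) - (a : ℤ))
                  + (μ : ℤ) * ((μ : ℤ) - (i : ℤ) - (k : ℤ) - 1))
          * (q2p (a + b - μ) / (q2p (b - μ) * q2p a))
          * (q2p i / (q2p μ * q2p (i - μ))) := by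
  have hb := q2p_ne b
  rw [eval_P, ← Finset.sum_range_reflect]
  have hsub : range (min b i + 1) ⊆ range (b + 1) := by
    intro t; simp only [Finset.mem_range]; omega
  have hcut : ∑ μ ∈ range (b + 1), A (q ^ (2 * i)) (q ^ (2 * i) * q ^ (2 * j)) b (b + 1 - 1 - μ)
        * (q ^ (2 * k)) ^ (b + 1 - 1 - μ) =
      ∑ μ ∈ range (min b i + 1), A (q ^ (2 * i)) (q ^ (2 * i) * q ^ (2 * j)) b (b + 1 - 1 - μ)
        * (q ^ (2 * k)) ^ (b + 1 - 1 - μ) := by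
    symm
    apply Finset.sum_subset hsub
    intro μ hμ hμ'
    simp only [Finset.mem_range] at hμ hμ'
    have hz : ∏ s ∈ Finset.range (b - (b + 1 - 1 - μ)), (q ^ (2 * s) - q ^ (2 * i)) = 0 := by
      apply Finset.prod_eq_zero (i := i)
      · simp only [Finset.mem_range]; omega
      · simp
    rw [A, hz]; simp
  rw [hcut, Finset.mul_sum, Finset.sum_div]
  apply Finset.sum_congr rfl
  intro μ hμ
  simp only [Finset.mem_range] at hμ
  obtain ⟨n, rfl⟩ := Nat.exists_eq_add_of_le (show μ ≤ b by omega)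
  have e1 : μ + n + 1 - 1 - μ = n := by omega
  have e2 : μ + n - n = μ := by omega
  have e3 : μ + n - μ = n := by omega
  have e4 : a + (μ + n) - μ = a + n := by omega
  have hG := G_closed (μ + n) n μ (by omega)
  have hw : q ^ (2 * i) * q ^ (2 * j) = q ^ (2 * (a + (μ + n))) := by
    rw [← pow_add]; congr 1; omega
  rw [A, e1, e2, e3, e4, prodE i μ (by omega), prodD a (μ + n) _ hw n, ← hG]
  have hGne : G (μ + n) n ≠ 0 := by
    intro h0; rw [h0, zero_mul] at hG; exact hb hG.symm
  have hk : (q ^ (2 * k)) ^ n = q ^ ((2 * k * n : ℕ) : ℤ) := by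
    rw [zpow_natCast, ← pow_mul]
  have hexp : q ^ ((i : ℤ) * (k : ℤ) + ((μ + n : ℕ) : ℤ)
                  + (((μ + n : ℕ) : ℤ) - (μ : ℤ)) * ((c : ℤ) - (a : ℤ))
                  + (μ : ℤ) * ((μ : ℤ) - (i : ℤ) - (k : ℤ) - 1)) =
      q ^ (((a : ℤ) - (j : ℤ)) * ((c : ℤ) - (j : ℤ))) *
        q ^ (-(((μ + n : ℕ) : ℤ) * (((μ + n : ℕ) : ℤ) - 1))) *
        q ^ ((μ : ℤ) * ((μ : ℤ) - 1)) * (q ^ (2 * k)) ^ n := by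
    rw [hk, ← zpow_add₀ q_ne, ← zpow_add₀ q_ne, ← zpow_add₀ q_ne]
    congr 1
    have ha : (a : ℤ) = i + j - (μ + n) := by omega
    have hc : (c : ℤ) = j + k - (μ + n) := by omega
    rw [ha, hc]
    push_cast
    ring
  rw [hexp]
  have := q2p_ne n
  have := q2p_ne μ
  have := q2p_ne a
  have := q2p_ne (i - μ)
  field_simp
end
end
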